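/- Let f : [0,1]^2 → ℝ be continuous and monotone (i.e. every level set f⁻¹(t) is connected). Then the set N = { t ∈ f([0,1]^2) : H¹(f⁻¹(t)) = 0 } of values in the image of f whose level set has zero one-dimensional Hausdorff measure contains at most two points. -/

import Mathlib

open MeasureTheory Set

noncomputable section

/-- The unit square `[0,1]²` in the Euclidean plane. -/
def unitSquare : Set (EuclideanSpace ℝ (Fin 2)) := {x | ∀ i, x i ∈ Set.Icc (0:ℝ) 1}

/-! A connected null set for `μH[1]` is a point, because the distance to a point of it is
`1`-Lipschitz and maps it onto an interval. Deleting a point from the square leaves a connected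
set, so by the intermediate value theorem a value attained at a single point is the minimum or
the maximum of the function. -/

theorem subsingleton_of_isPreconnected_of_hausdorffMeasure_one_eq_zero {X : Type*} [MetricSpace X]
    [MeasurableSpace X] [BorelSpace X] {s : Set X} (hs : IsPreconnected s) (h₀ : μH[1] s = 0) :
    s.Subsingleton := by
  intro x hx y hy
  have hdist : LipschitzWith 1 (dist · x) := LipschitzWith.dist_left x
  have himage : volume ((dist · x) '' s) = 0 := by
    rw [← hausdorffMeasure_real]
    simpa [h₀] using hdist.lipschitzOnWith.hausdorffMeasure_image_le (s := s) zero_le_one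
  have hIcc : Icc (dist x x) (dist y x) ⊆ (dist · x) '' s :=
    hs.intermediate_value hx hy hdist.continuous.continuousOn
  have hvolume : volume (Icc (dist x x) (dist y x)) = 0 := measure_mono_null hIcc himage
  rw [Real.volume_Icc, dist_self, sub_zero, ENNReal.ofReal_eq_zero] at hvolume
  exact (dist_le_zero.1 hvolume).symm

theorem exists_mem_notMem_affineSpan_pair_of_not_collinear {k V P : Type*} [DivisionRing k]
    [AddCommGroup V] [Module k V] [AddTorsor V P] {s : Set P} (hs : ¬Collinear k s) (a b : P) :
    ∃ z ∈ s, z ∉ line[k, a, b] := by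
  by_contra! h
  refine hs ((collinear_iff_exists_forall_eq_smul_vadd s).2 ⟨a, b -ᵥ a, fun z hz ↦ ?_⟩)
  obtain ⟨r, rfl⟩ := mem_affineSpan_pair_iff_exists_lineMap_eq.1 (h z hz)
  exact ⟨r, AffineMap.lineMap_apply a b r⟩

theorem isPreconnected_sdiff_singleton_of_convex {E : Type*} [AddCommGroup E] [Module ℝ E]
    [TopologicalSpace E] [ContinuousAdd E] [ContinuousSMul ℝ E] {s : Set E} (hs : Convex ℝ s)
    (hcol : ¬Collinear ℝ s) (p : E) : IsPreconnected (s \ {p}) := by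
  refine isPreconnected_of_forall_pair fun x ⟨hx, hxp⟩ y ⟨hy, hyp⟩ ↦ ?_
  by_cases hp : p ∈ segment ℝ x y
  · obtain ⟨z, hz, hzline⟩ := exists_mem_notMem_affineSpan_pair_of_not_collinear hcol x p
    have hyline : y ∈ line[ℝ, x, p] :=
      (mem_segment_iff_wbtw.1 hp).right_mem_affineSpan_of_left_ne hxp
    have hpxz : p ∉ segment ℝ x z := fun h ↦
      hzline ((mem_segment_iff_wbtw.1 h).right_mem_affineSpan_of_left_ne hxp)
    have hpyz : p ∉ segment ℝ y z := fun h ↦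
      hzline (affineSpan_pair_le_of_mem_of_mem hyline (right_mem_affineSpan_pair ℝ x p)
        ((mem_segment_iff_wbtw.1 h).right_mem_affineSpan_of_left_ne hyp))
    exact ⟨segment ℝ x z ∪ segment ℝ y z,
      union_subset (subset_sdiff_singleton (hs.segment_subset hx hz) hpxz)
        (subset_sdiff_singleton (hs.segment_subset hy hz) hpyz),
      .inl (left_mem_segment ℝ x z), .inr (left_mem_segment ℝ y z),
      (convex_segment x z).isPreconnected.union z (right_mem_segment ℝ x z)
        (right_mem_segment ℝ y z) (convex_segment y z).isPreconnected⟩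
  · exact ⟨segment ℝ x y, subset_sdiff_singleton (hs.segment_subset hx hy) hp,
      left_mem_segment ℝ x y, right_mem_segment ℝ x y, (convex_segment x y).isPreconnected⟩

theorem isLeast_or_isGreatest_image_of_isPreconnected_sdiff_singleton {X α : Type*}
    [TopologicalSpace X] [LinearOrder α] [TopologicalSpace α] [OrderClosedTopology α] {s : Set X}
    {f : X → α} {p : X} (hs : IsPreconnected (s \ {p})) (hf : ContinuousOn f (s \ {p}))
    (hp : p ∈ s) (hfp : (s ∩ f ⁻¹' {f p}).Subsingleton) :
    IsLeast (f '' s) (f p) ∨ IsGreatest (f '' s) (f p) := by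
  have hmem : f p ∈ f '' s := mem_image_of_mem f hp
  by_contra! ⟨hleast, hgreatest⟩
  obtain ⟨x, hx, hxp⟩ : ∃ x ∈ s, f x < f p := by
    by_contra! h
    exact hleast ⟨hmem, forall_mem_image.2 h⟩
  obtain ⟨y, hy, hpy⟩ : ∃ y ∈ s, f p < f y := by
    by_contra! h
    exact hgreatest ⟨hmem, forall_mem_image.2 h⟩
  obtain ⟨q, ⟨hq, hqp⟩, hfq⟩ := hs.intermediate_value ⟨hx, ne_of_apply_ne f hxp.ne⟩
    ⟨hy, ne_of_apply_ne f hpy.ne'⟩ hf ⟨hxp.le, hpy.le⟩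
  exact hqp (hfp ⟨hq, hfq⟩ ⟨hp, rfl⟩)

theorem encard_setOf_isLeast_or_isGreatest_le_two {α : Type*} [PartialOrder α] (s : Set α) :
    {a | IsLeast s a ∨ IsGreatest s a}.encard ≤ 2 :=
  calc {a | IsLeast s a ∨ IsGreatest s a}.encard
      ≤ {a | IsLeast s a}.encard + {a | IsGreatest s a}.encard := encard_union_le _ _
    _ ≤ 1 + 1 := add_le_add (encard_le_one_iff_subsingleton.2 fun _ ha _ hb ↦ ha.unique hb)
        (encard_le_one_iff_subsingleton.2 fun _ ha _ hb ↦ ha.unique hb)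
    _ = 2 := one_add_one_eq_two

theorem convex_unitSquare : Convex ℝ unitSquare := by
  rw [unitSquare, ofPred_forall]
  exact convex_iInter fun i ↦
    (convex_Icc (0 : ℝ) 1).linear_preimage (EuclideanSpace.proj (𝕜 := ℝ) i).toLinearMap

theorem not_collinear_unitSquare : ¬Collinear ℝ unitSquare := by
  have horigin : (0 : EuclideanSpace ℝ (Fin 2)) ∈ unitSquare := fun _ ↦ by simp
  have he (j : Fin 2) : EuclideanSpace.single j (1 : ℝ) ∈ unitSquare := fun i ↦ by
    by_cases hij : i = j <;> simp [hij]
  intro h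
  obtain ⟨v, hv⟩ := (collinear_iff_of_mem horigin).1 h
  obtain ⟨a, ha⟩ := hv _ (he 0)
  obtain ⟨b, hb⟩ := hv _ (he 1)
  have ha₀ : 1 = a * v 0 := by simpa using congr($ha 0)
  have ha₁ : a = 0 ∨ v 1 = 0 := by simpa using congr($ha 1)
  have hb₁ : 1 = b * v 1 := by simpa using congr($hb 1)
  rcases ha₁ with h | h
  · simp [h] at ha₀
  · simp [h] at hb₁

theorem negligible_values_encard_le_two_general {X α : Type*} [MetricSpace X] [MeasurableSpace X]
    [BorelSpace X] [LinearOrder α] [TopologicalSpace α] [OrderClosedTopology α] {s : Set X}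
    {f : X → α} (hs : ∀ p ∈ s, IsPreconnected (s \ {p})) (hf : ContinuousOn f s)
    (hmono : ∀ t, IsPreconnected (s ∩ f ⁻¹' {t})) :
    {t | t ∈ f '' s ∧ μH[1] (s ∩ f ⁻¹' {t}) = 0}.encard ≤ 2 := by
  refine (encard_le_encard ?_).trans (encard_setOf_isLeast_or_isGreatest_le_two (f '' s))
  rintro _ ⟨⟨p, hp, rfl⟩, hnull⟩
  exact isLeast_or_isGreatest_image_of_isPreconnected_sdiff_singleton (hs p hp)
    (hf.mono sdiff_subset) hp
    (subsingleton_of_isPreconnected_of_hausdorffMeasure_one_eq_zero (hmono (f p)) hnull)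

/-- If `f : [0,1]² → ℝ` is continuous and monotone (every level set is connected), then the
set `N` of values `t` in the image of `f` whose level set has zero one-dimensional Hausdorff
measure contains at most two points. -/
theorem negligible_values_encard_le_two (f : EuclideanSpace ℝ (Fin 2) → ℝ)
    (hf : ContinuousOn f unitSquare)
    (hmono : ∀ t : ℝ, IsPreconnected (unitSquare ∩ f ⁻¹' {t})) :
    {t : ℝ | t ∈ f '' unitSquare ∧ μH[1] (unitSquare ∩ f ⁻¹' {t}) = 0}.encard ≤ 2 :=
  negligible_values_encard_le_two_general
    (fun p _ ↦
      isPreconnected_sdiff_singleton_of_convex convex_unitSquare not_collinear_unitSquare p)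
    hf hmono
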